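/- arXiv:1205.0343 — 2 statements merged into one kernel-verified Lean document; each statement's English description precedes it below -/
import Mathlib

section
/- Let k ≥ 3 and let n_1, …, n_k be positive integers such that n_1 is odd with n_1 ≠ 3, and n_i is even with n_i ≥ 4 for every i with 2 ≤ i ≤ k. Then the signed domination number of the complete k-partite graph K_{n_1,…,n_k} equals 5. -/
open scoped Classical

/-- The signed domination number of a finite simple graph `G`: the minimum weight of a
function `f : V → {−1, 1}` such that `f(N[v]) ≥ 1` for every vertex `v`. -/
noncomputable def signedDomNum {V : Type*} [Fintype V] (G : SimpleGraph V) : ℤ :=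
  sInf {w : ℤ | ∃ f : V → ℤ, (∀ v, f v = 1 ∨ f v = -1) ∧
    (∀ v, 1 ≤ f v + ∑ u ∈ G.neighborFinset v, f u) ∧ w = ∑ v, f v}

/-- In a complete multipartite graph, the sum over an open neighborhood is the total sum minus the
sum over the part of the vertex. -/
theorem sum_neighborFinset_completeMultipartiteGraph {ι : Type*} [Fintype ι] {V : ι → Type*}
    [∀ i, Fintype (V i)] (f : (Σ i, V i) → ℤ) (v : Σ i, V i)
    [Fintype ((SimpleGraph.completeMultipartiteGraph V).neighborSet v)] :
    ∑ u ∈ (SimpleGraph.completeMultipartiteGraph V).neighborFinset v, f u =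
      ∑ i, ∑ x, f ⟨i, x⟩ - ∑ x, f ⟨v.1, x⟩ := by
  have hfilter : (SimpleGraph.completeMultipartiteGraph V).neighborFinset v =
      Finset.univ.filter fun u => u.1 ≠ v.1 := by
    ext u
    simp [SimpleGraph.completeMultipartiteGraph, eq_comm]
  rw [hfilter, Finset.sum_filter, Fintype.sum_sigma,
    ← Finset.add_sum_erase _ (fun i => ∑ x, f ⟨i, x⟩) (Finset.mem_univ v.1),
    ← Finset.add_sum_erase _ _ (Finset.mem_univ v.1)]
  simp only [ne_eq, not_true_eq_false, if_false, Finset.sum_const_zero, zero_add,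
    add_sub_cancel_left]
  refine Finset.sum_congr rfl fun i hi => Finset.sum_congr rfl fun x _ => ?_
  rw [if_pos (Finset.ne_of_mem_erase hi)]

/-- A sum of signs has the parity of the number of its terms. -/
theorem two_dvd_sum_sub_card_of_sign {α : Type*} [Fintype α] {g : α → ℤ}
    (hg : ∀ x, g x = 1 ∨ g x = -1) : (2 : ℤ) ∣ ∑ x, g x - Fintype.card α := by
  have hsum : ∑ x, g x - (Fintype.card α : ℤ) = ∑ x, (g x - 1) := by
    simp [Finset.sum_sub_distrib]
  rw [hsum]
  refine Finset.dvd_sum fun x _ => ?_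
  rcases hg x with h | h <;> rw [h] <;> decide

theorem sum_ite_lt_neg_one_one {N m : ℕ} (hm : m ≤ N) :
    ∑ j : Fin N, (if (j : ℕ) < m then (-1 : ℤ) else 1) = N - 2 * m := by
  rw [Fin.sum_univ_eq_sum_range (fun j => if j < m then (-1 : ℤ) else 1) N,
    ← Finset.sum_range_add_sum_Ico _ hm,
    Finset.sum_congr rfl fun j hj => if_pos (Finset.mem_range.1 hj),
    Finset.sum_congr rfl fun j hj => if_neg (not_lt.2 (Finset.mem_Ico.1 hj).1)]
  simp only [Finset.sum_const, Finset.card_range, Nat.card_Ico, nsmul_eq_mul]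
  push_cast [hm]
  ring

theorem signedDomNum_eq_five_multipartite
    (k : ℕ) (hk : 3 ≤ k) (n : Fin k → ℕ) (hn : ∀ i, 0 < n i)
    (h₁ : Odd (n ⟨0, by omega⟩)) (h₁' : n ⟨0, by omega⟩ ≠ 3)
    (h₂ : ∀ i : Fin k, i ≠ ⟨0, by omega⟩ → Even (n i) ∧ 4 ≤ n i) :
    signedDomNum (SimpleGraph.completeMultipartiteGraph fun i : Fin k => Fin (n i)) = 5 := by
  obtain ⟨z, hz⟩ : ∃ z : Fin k, z = ⟨0, by omega⟩ := ⟨_, rfl⟩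
  obtain ⟨p, hp⟩ : ∃ p : Fin k, p = ⟨1, by omega⟩ := ⟨_, rfl⟩
  obtain ⟨q, hq⟩ : ∃ q : Fin k, q = ⟨2, by omega⟩ := ⟨_, rfl⟩
  have hpz : p ≠ z := by simp [hp, hz]
  have hqz : q ≠ z := by simp [hq, hz]
  have hpq : p ≠ q := by simp [hp, hq]
  rw [← hz] at h₁ h₁' h₂
  refine IsLeast.csInf_eq ⟨?_, ?_⟩
  · obtain ⟨a, ha⟩ : ∃ a : Fin k → ℕ, ∀ i, a i =
        (if i = z then 1 else 0) + (if i = p then 2 else 0) + (if i = q then 2 else 0) :=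
      ⟨_, fun _ => rfl⟩
    have ha_le : ∀ i, a i ≤ 2 := by
      intro i
      rw [ha]
      split_ifs <;> simp_all
    have ha_half : ∀ i, n i = a i + 2 * ((n i - a i) / 2) := by
      intro i
      by_cases hi : i = z
      · have haz : a z = 1 := by simp [ha, hpz.symm, hqz.symm]
        rw [hi, haz]
        grind
      · have ha_even : Even (a i) := by
          rw [ha, if_neg hi]
          split_ifs <;> decide
        have := h₂ i hi
        have := ha_le i
        grind
    obtain ⟨f, hf⟩ : ∃ f : (Σ i, Fin (n i)) → ℤ, ∀ i j, f ⟨i, j⟩ =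
        if (j : ℕ) < (n i - a i) / 2 then -1 else 1 :=
      ⟨fun v => if (v.2 : ℕ) < (n v.1 - a v.1) / 2 then -1 else 1, fun _ _ => rfl⟩
    have hpart : ∀ i, ∑ j, f ⟨i, j⟩ = a i := by
      intro i
      simp only [hf]
      rw [sum_ite_lt_neg_one_one (by omega)]
      have := ha_half i
      omega
    have htotal : ∑ i, ∑ j, f ⟨i, j⟩ = 5 := by
      simp only [hpart, ha]
      push_cast
      simp [Finset.sum_add_distrib]
    have hsign : ∀ v, f v = 1 ∨ f v = -1 := by
      rintro ⟨i, j⟩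
      rw [hf]
      split_ifs <;> simp
    refine ⟨f, hsign, fun v => ?_, ?_⟩
    · rw [sum_neighborFinset_completeMultipartiteGraph, htotal, hpart]
      have := ha_le v.1
      have := hsign v
      omega
    · rw [Fintype.sum_sigma, htotal]
  · rintro w ⟨f, hsign, hdom, rfl⟩
    simp only [sum_neighborFinset_completeMultipartiteGraph] at hdom
    rw [Fintype.sum_sigma]
    obtain ⟨a, ha⟩ : ∃ a : Fin k → ℤ, ∀ i, a i = ∑ j, f ⟨i, j⟩ := ⟨_, fun _ => rfl⟩
    simp only [← ha] at hdom ⊢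
    have hparity : ∀ i, (2 : ℤ) ∣ a i - n i := by
      intro i
      simpa [ha] using two_dvd_sum_sub_card_of_sign fun j => hsign ⟨i, j⟩
    have hcases : ∀ i, 2 ≤ ∑ i, a i - a i ∨ (a i = n i ∧ 0 ≤ ∑ i, a i - a i) := by
      intro i
      by_cases hi : ∀ j, f ⟨i, j⟩ = 1
      · refine Or.inr ⟨by simp [ha, hi], ?_⟩
        have := hdom ⟨i, ⟨0, hn i⟩⟩
        rw [hi] at this
        linarith
      · push Not at hi
        obtain ⟨j, hj⟩ := hi
        have := hdom ⟨i, j⟩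
        rw [(hsign _).resolve_left hj] at this
        left
        linarith
    have hsplit := Finset.add_sum_erase Finset.univ a (Finset.mem_univ z)
    have hrest_even : (2 : ℤ) ∣ ∑ i ∈ Finset.univ.erase z, a i := by
      refine Finset.dvd_sum fun i hi => ?_
      obtain ⟨m, hm⟩ := (h₂ i (Finset.ne_of_mem_erase hi)).1
      have := hparity i
      omega
    by_contra! hlt
    have hrest : ∀ i ∈ Finset.univ.erase z, a i ≤ ∑ i, a i - 3 := by
      intro i hi
      obtain ⟨⟨m, hm⟩, hfour⟩ := h₂ i (Finset.ne_of_mem_erase hi)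
      obtain ⟨l, hl⟩ := h₁
      have := hparity i
      have := hparity z
      have := hcases i
      omega
    have hz_cases := hcases z
    have hpar := hparity z
    obtain ⟨l, hl⟩ := h₁
    have hrest_nonpos : ∑ i ∈ Finset.univ.erase z, a i ≤ 0 :=
      Finset.sum_nonpos fun i hi => (hrest i hi).trans (by omega)
    have htotal : ∑ i, a i = 1 := by omega
    have hrest_neg : ∑ i ∈ Finset.univ.erase z, a i < 0 := by
      refine Finset.sum_neg (fun i hi => ?_) ⟨p, by simp [hpz]⟩
      have := hrest i hi
      omega
    omega
end

section
/- Let n_1 ≥ 3 be an odd integer and n_2 a positive even integer with n_1 = 3 or n_2 = 2. Then the signed domination number of the complete bipartite graph K_{n_1,n_2} equals 3. -/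
open scoped Classical

/-- A sum of signs over `Fin n` has the parity of `n`. -/
theorem sum_signs_emod_two {n : ℕ} (f : Fin n → ℤ) (hf : ∀ i, f i = 1 ∨ f i = -1) :
    (∑ i, f i) % 2 = n % 2 := by
  have hmod : ∀ i, f i % 2 = 1 := fun i => by rcases hf i with h | h <;> simp [h]
  rw [Finset.sum_int_mod]
  simp [hmod]

theorem sum_fin_neg_one_pow (n : ℕ) :
    ∑ i : Fin n, (-1 : ℤ) ^ (i : ℕ) = if Even n then 0 else 1 := by
  rw [Fin.sum_univ_eq_sum_range (fun i => (-1 : ℤ) ^ i), neg_one_geom_sum]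

theorem sum_neighborFinset_completeBipartiteGraph_inl {α β : Type*} [Fintype α] [Fintype β]
    (f : α ⊕ β → ℤ) (a : α) :
    ∑ u ∈ (completeBipartiteGraph α β).neighborFinset (Sum.inl a), f u = ∑ b, f (Sum.inr b) := by
  have hN : (completeBipartiteGraph α β).neighborFinset (Sum.inl a) =
      Finset.univ.map Function.Embedding.inr := by
    ext (x | x) <;> simp
  rw [hN, Finset.sum_map]
  rfl

theorem sum_neighborFinset_completeBipartiteGraph_inr {α β : Type*} [Fintype α] [Fintype β]
    (f : α ⊕ β → ℤ) (b : β) :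
    ∑ u ∈ (completeBipartiteGraph α β).neighborFinset (Sum.inr b), f u = ∑ a, f (Sum.inl a) := by
  have hN : (completeBipartiteGraph α β).neighborFinset (Sum.inr b) =
      Finset.univ.map Function.Embedding.inl := by
    ext (x | x) <;> simp
  rw [hN, Finset.sum_map]
  rfl

/-- Every signed dominating function of `K_{n₁,n₂}` with `n₁ ≥ 3` odd and `n₂ > 0` even has
weight at least `3`. -/
theorem three_le_weight_of_signedDominating {n₁ n₂ : ℕ} (h₁ : Odd n₁) (h₁' : 3 ≤ n₁)
    (h₂ : Even n₂) (h₂' : 0 < n₂) (f : Fin n₁ ⊕ Fin n₂ → ℤ)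
    (hf : ∀ v, f v = 1 ∨ f v = -1)
    (hdom : ∀ v, 1 ≤ f v +
      ∑ u ∈ (completeBipartiteGraph (Fin n₁) (Fin n₂)).neighborFinset v, f u) :
    3 ≤ ∑ v, f v := by
  rw [Fintype.sum_sum_type]
  have hA := sum_signs_emod_two (fun i => f (Sum.inl i)) fun i => hf _
  have hB := sum_signs_emod_two (fun i => f (Sum.inr i)) fun i => hf _
  have hl : ∀ i, 1 ≤ f (Sum.inl i) + ∑ j, f (Sum.inr j) := fun i => by
    rw [← sum_neighborFinset_completeBipartiteGraph_inl f i]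
    exact hdom _
  have hr : ∀ j, 1 ≤ f (Sum.inr j) + ∑ i, f (Sum.inl i) := fun j => by
    rw [← sum_neighborFinset_completeBipartiteGraph_inr f j]
    exact hdom _
  rw [Nat.odd_iff] at h₁
  rw [Nat.even_iff] at h₂
  have hr₀ := hr ⟨0, h₂'⟩
  have hfr₀ := hf (Sum.inr ⟨0, h₂'⟩)
  by_cases hall : ∀ i, f (Sum.inl i) = 1
  · have hl₀ := hl ⟨0, by omega⟩
    simp only [hall, Finset.sum_const, Finset.card_univ, Fintype.card_fin, nsmul_eq_mul,
      mul_one] at *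
    omega
  · obtain ⟨i, hi⟩ := not_forall.mp hall
    have hli := hl i
    have hfi := hf (Sum.inl i)
    omega

theorem signedDomNum_completeBipartite_eq_three
    (n₁ n₂ : ℕ) (h₁ : Odd n₁) (h₁' : 3 ≤ n₁) (h₂ : Even n₂) (h₂' : 0 < n₂)
    (h : n₁ = 3 ∨ n₂ = 2) :
    signedDomNum (completeBipartiteGraph (Fin n₁) (Fin n₂)) = 3 := by
  rw [signedDomNum]
  refine IsLeast.csInf_eq ⟨?_, ?_⟩
  · rcases h with rfl | rfl
    · refine ⟨Sum.elim (fun _ => 1) fun j => (-1) ^ (j : ℕ), ?_, ?_, ?_⟩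
      · rintro (i | j)
        · simp
        · exact neg_one_pow_eq_or ℤ _
      · rintro (i | j)
        · simp [sum_neighborFinset_completeBipartiteGraph_inl, sum_fin_neg_one_pow, h₂]
        · rw [sum_neighborFinset_completeBipartiteGraph_inr]
          rcases neg_one_pow_eq_or ℤ (j : ℕ) with hj | hj <;> simp [hj]
      · simp [sum_fin_neg_one_pow, h₂]
    · have h₁e : ¬ Even n₁ := Nat.not_even_iff_odd.mpr h₁
      refine ⟨Sum.elim (fun i => (-1) ^ (i : ℕ)) fun _ => 1, ?_, ?_, ?_⟩
      · rintro (i | j)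
        · exact neg_one_pow_eq_or ℤ _
        · simp
      · rintro (i | j)
        · rw [sum_neighborFinset_completeBipartiteGraph_inl]
          rcases neg_one_pow_eq_or ℤ (i : ℕ) with hi | hi <;> simp [hi]
        · simp [sum_neighborFinset_completeBipartiteGraph_inr, sum_fin_neg_one_pow, h₁e]
      · simp [sum_fin_neg_one_pow, h₁e]
  · rintro w ⟨f, hf, hdom, rfl⟩
    exact three_le_weight_of_signedDominating h₁ h₁' h₂ h₂' f hf hdom
end
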